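/- arXiv:2101.07546 — 6 statements merged into one kernel-verified Lean document; each statement's English description precedes it below -/
import Mathlib

section
/- Let d, k, Q ∈ ℕ with Q ≥ 2 and 1 ≤ k ≤ d. Let y ∈ B(d,k), let T ⊆ B(d,k) with y ∉ T, and set S = supp(y). Then every restriction w|_S with w ∈ star_Q(T) has at least one zero coordinate, and consequently |{ w|_S : w ∈ star_Q(T) }| ≤ k · Q^{k−1}. -/
open scoped Classical

/-- The support of a word `w ∈ [Q]^d`: the set of coordinates where `w` is nonzero. -/
def supp {d Q : ℕ} [NeZero Q] (w : Fin d → Fin Q) : Finset (Fin d) :=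
  Finset.univ.filter (fun i => w i ≠ 0)

/-- `star_Q(T)`: all `Q`-ary words whose support is contained in the support of some
binary word in `T`. -/
def starQ {d : ℕ} (Q : ℕ) [NeZero Q] (T : Set (Fin d → Fin 2)) : Set (Fin d → Fin Q) :=
  {w | ∃ y ∈ T, supp w ⊆ supp y}

/-- The restriction `w|_S` of a word `w` to the coordinates in `S`. -/
def restrict {d Q : ℕ} (S : Finset (Fin d)) (w : Fin d → Fin Q) : S → Fin Q :=
  fun i => w i

/-- Let `d, k, Q ∈ ℕ` with `Q ≥ 2` and `1 ≤ k ≤ d`.  Let `y ∈ B(d,k)`,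
let `T ⊆ B(d,k)` with `y ∉ T`, and set `S = supp(y)`.  Then every restriction `w|_S` with
`w ∈ star_Q(T)` has at least one zero coordinate, and consequently
`|{ w|_S : w ∈ star_Q(T) }| ≤ k · Q^(k−1)`. -/
theorem stmt_3 (d k Q : ℕ) [NeZero Q] (hQ : 2 ≤ Q) (hk : 1 ≤ k) (hkd : k ≤ d)
    (T : Set (Fin d → Fin 2)) (hT : ∀ z ∈ T, (supp z).card = k)
    (y : Fin d → Fin 2) (hycard : (supp y).card = k) (hy : y ∉ T) :
    (∀ w ∈ starQ Q T, ∃ i : (supp y : Finset (Fin d)), restrict (supp y) w i = 0) ∧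
      (restrict (supp y) '' starQ Q T).ncard ≤ k * Q ^ (k - 1) := by
  have h1 : ∀ w ∈ starQ Q T, ∃ i : (supp y : Finset (Fin d)), restrict (supp y) w i = 0 := by
    rintro w ⟨z, hz, hwz⟩
    by_contra hcon
    push Not at hcon
    have hsub : supp y ⊆ supp z := by
      intro i hi
      apply hwz
      have := hcon ⟨i, hi⟩
      simpa [supp, restrict] using this
    have heq : supp y = supp z :=
      Finset.eq_of_subset_of_card_le hsub (by rw [hT z hz, hycard])
    apply hy
    have hyz : y = z := by
      funext i
      have h := congrArg (fun s => i ∈ s) heq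
      simp only [supp, Finset.mem_filter, Finset.mem_univ, true_and, eq_iff_iff] at h
      generalize y i = a at h
      generalize z i = b at h
      omega
    rw [hyz]
    exact hz
  refine ⟨h1, ?_⟩
  let F : ↥(supp y) → Finset (↥(supp y) → Fin Q) := fun i =>
    Fintype.piFinset (fun j => if j = i then {0} else Finset.univ)
  have hF : ∀ i, (F i).card = Q ^ (k - 1) := by
    intro i
    simp only [F, Fintype.card_piFinset]
    rw [← Finset.mul_prod_erase Finset.univ _ (Finset.mem_univ i)]
    rw [Finset.prod_congr rfl (g := fun _ => Q)]
    · simp [hycard]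
    · intro j hj
      simp [Finset.ne_of_mem_erase hj]
  have hsub : restrict (supp y) '' starQ Q T ⊆ (↑(Finset.univ.biUnion F) : Set (↥(supp y) → Fin Q)) := by
    rintro _ ⟨w, hw, rfl⟩
    obtain ⟨i, hi⟩ := h1 w hw
    simp only [Finset.coe_biUnion, Set.mem_iUnion]
    refine ⟨i, by simp, ?_⟩
    simp only [F, Finset.mem_coe, Fintype.mem_piFinset]
    intro j
    by_cases hj : j = i
    · subst hj; simp [hi]
    · simp [hj]
  calc _ ≤ _ := Set.ncard_le_ncard hsub (Finset.finite_toSet _)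
    _ = (Finset.univ.biUnion F).card := Set.ncard_coe_finset _
    _ ≤ _ := Finset.card_biUnion_le_card_mul _ _ _ (fun i _ => (hF i).le)
    _ = _ := by simp [hycard]
end

section
/- Fix ε, γ ∈ (0,1) and d ∈ ℕ with εd an integer. Let 𝒞 ⊆ B(d, εd) be a code such that any two distinct codewords have at most (ε² + γ)d ones in common. Let T ⊆ 𝒞, let y ∈ 𝒞 \ T, and set S = {1,…,d} \ supp(y). Then the number of words w ∈ star_2(T) with w|_S equal to the all-zeros pattern 0_S is at most |T| · 2^{(ε²+γ)d}. -/
open scoped Classical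

/-- The support of a binary word: the set of coordinates where it equals 1. -/
def supp2 {d : ℕ} (w : Fin d → Fin 2) : Finset (Fin d) :=
  Finset.univ.filter (fun i => w i ≠ 0)

/-- `star_2(T)`: all binary words whose support is contained in the support of some
word in `T`. -/
def star2 {d : ℕ} (T : Finset (Fin d → Fin 2)) : Finset (Fin d → Fin 2) :=
  Finset.univ.filter (fun w => ∃ y ∈ T, supp2 w ⊆ supp2 y)

/-- Fix `ε, γ ∈ (0,1)` and `d ∈ ℕ` with `k = εd` an integer.  Let
`𝒞 ⊆ B(d, εd)` be a code such that any two distinct codewords have at most `(ε² + γ)d`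
ones in common.  Let `T ⊆ 𝒞`, let `y ∈ 𝒞 \ T`, and set `S = {1,…,d} \ supp(y)`.  Then the
number of words `w ∈ star_2(T)` with `w|_S` equal to the all-zeros pattern is at most
`|T| · 2^{(ε²+γ)d}`. -/
theorem stmt_8 (d k : ℕ) (ε γ : ℝ) (hε : ε ∈ Set.Ioo (0 : ℝ) 1)
    (hγ : γ ∈ Set.Ioo (0 : ℝ) 1) (hk : (k : ℝ) = ε * d)
    (𝒞 : Finset (Fin d → Fin 2)) (hw : ∀ z ∈ 𝒞, (supp2 z).card = k)
    (hcode : ∀ x ∈ 𝒞, ∀ x' ∈ 𝒞, x ≠ x' →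
      ((supp2 x ∩ supp2 x').card : ℝ) ≤ (ε ^ 2 + γ) * d)
    (T : Finset (Fin d → Fin 2)) (hT : T ⊆ 𝒞)
    (y : Fin d → Fin 2) (hy𝒞 : y ∈ 𝒞) (hyT : y ∉ T) :
    (((star2 T).filter
          (fun w => ∀ i ∈ (Finset.univ \ supp2 y : Finset (Fin d)), w i = 0)).card : ℝ)
      ≤ (T.card : ℝ) * (2 : ℝ) ^ ((ε ^ 2 + γ) * d) := by
  have hinj : Function.Injective (supp2 : (Fin d → Fin 2) → Finset (Fin d)) := by
    intro a b h
    funext i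
    have h1 : i ∈ supp2 a ↔ i ∈ supp2 b := by rw [h]
    simp only [supp2, Finset.mem_filter, Finset.mem_univ, true_and] at h1
    omega
  have h1 : ((star2 T).filter
      (fun w => ∀ i ∈ (Finset.univ \ supp2 y : Finset (Fin d)), w i = 0)).image supp2
      ⊆ T.biUnion (fun x => (supp2 x ∩ supp2 y).powerset) := by
    intro s hs
    obtain ⟨w, hw1, rfl⟩ := Finset.mem_image.1 hs
    obtain ⟨hw2, hw3⟩ := Finset.mem_filter.1 hw1
    obtain ⟨x, hx, hwx⟩ := (Finset.mem_filter.1 hw2).2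
    refine Finset.mem_biUnion.2 ⟨x, hx, Finset.mem_powerset.2 (Finset.subset_inter hwx ?_)⟩
    intro i hi
    by_contra hiy
    exact (Finset.mem_filter.1 hi).2
      (hw3 i (Finset.mem_sdiff.2 ⟨Finset.mem_univ i, hiy⟩))
  have h2 := (Finset.card_le_card h1).trans Finset.card_biUnion_le
  rw [Finset.card_image_of_injective _ hinj] at h2
  refine (Nat.cast_le (α := ℝ).2 h2).trans ?_
  rw [Nat.cast_sum, ← nsmul_eq_mul]
  refine Finset.sum_le_card_nsmul _ _ _ ?_
  intro x hx
  rw [Finset.card_powerset, Nat.cast_pow, Nat.cast_ofNat, ← Real.rpow_natCast]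
  refine Real.rpow_le_rpow_of_exponent_le (by norm_num) (hcode x (hT hx) y hy𝒞 ?_)
  rintro rfl
  exact hyT hx
end

section
/- Fix p > 1, ε ∈ (0,1/2) and γ ∈ (0,1), and d ∈ ℕ with εd an integer. Let 𝒞 ⊆ B(d, εd) be a code such that any two distinct codewords have at most (ε²+γ)d ones in common, let T ⊆ 𝒞 with y ∈ T, and set S = {1,…,d} \ supp(y). Let A be the multiset of rows consisting of 2^{εd} copies of the all-ones word 1_d together with one copy of each word in star_2(T). Then F_p(A,S) ≤ |𝒞|^{1+p} · 2^{εd + (ε²+γ)dp} + 2^{εpd} + (2^{εd} + |𝒞|·2^{(ε²+γ)d})^p, where the three terms bound, respectively, the contribution of all patterns other than 1_S and 0_S, the contribution of the all-ones pattern 1_S, and the contribution of the all-zeros pattern 0_S. -/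
open scoped Classical

/-- The frequency of the pattern `z ∈ {0,1}^S` among the rows of the multiset `A`:
the number of rows `w` of `A` with `w|_S = z`. -/
noncomputable def freq {d : ℕ} (A : Multiset (Fin d → Fin 2)) (S : Finset (Fin d))
    (z : S → Fin 2) : ℕ :=
  (A.filter (fun w => ∀ i : S, w i = z i)).card

/-- The projected frequency moment `F_p(A,S) = Σ_z f_z(A,S)^p`. -/
noncomputable def Fp {d : ℕ} (A : Multiset (Fin d → Fin 2)) (S : Finset (Fin d))
    (p : ℝ) : ℝ :=
  ∑ z : S → Fin 2, (freq A S z : ℝ) ^ p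

theorem supp2_inj {d : ℕ} {w w' : Fin d → Fin 2} (h : supp2 w = supp2 w') : w = w' := by
  funext i
  have h1 : i ∈ supp2 w ↔ i ∈ supp2 w' := by rw [h]
  simp only [supp2, Finset.mem_filter, Finset.mem_univ, true_and] at h1
  generalize w i = a at *
  generalize w' i = b at *
  revert h1
  revert a b
  decide

theorem mem_supp2 {d : ℕ} {w : Fin d → Fin 2} {i : Fin d} : i ∈ supp2 w ↔ w i ≠ 0 := by
  simp [supp2]

/-- words below x matching z outside supp y -/
noncomputable def cell {d : ℕ} (y x : Fin d → Fin 2)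
    (z : ((Finset.univ \ supp2 y : Finset (Fin d))) → Fin 2) : Finset (Fin d → Fin 2) :=
  Finset.univ.filter (fun w => supp2 w ⊆ supp2 x ∧
    ∀ i : ((Finset.univ \ supp2 y : Finset (Fin d))), w i = z i)

theorem cell_card {d : ℕ} (y x : Fin d → Fin 2)
    (z : ((Finset.univ \ supp2 y : Finset (Fin d))) → Fin 2) :
    (cell y x z).card ≤ 2 ^ (supp2 x ∩ supp2 y).card := by
  rw [← Finset.card_powerset]
  apply Finset.card_le_card_of_injOn (fun w => supp2 w ∩ supp2 y)
  · intro w hw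
    simp only [cell, Finset.coe_filter, Finset.mem_univ, true_and, Set.mem_ofPred_eq] at hw
    simp only [Finset.coe_powerset, Set.mem_preimage, Set.mem_powerset_iff, Finset.coe_subset]
    exact Finset.inter_subset_inter_right hw.1
  · intro w hw w' hw' h
    simp only [cell, Finset.coe_filter, Finset.mem_univ, true_and, Set.mem_ofPred_eq] at hw hw'
    apply supp2_inj
    ext i
    by_cases hi : i ∈ supp2 y
    · have : i ∈ supp2 w ∩ supp2 y ↔ i ∈ supp2 w' ∩ supp2 y := by
        simp only at h
        rw [h]
      simpa [hi] using this
    · have hi' : i ∈ Finset.univ \ supp2 y := by simpa using hi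
      rw [mem_supp2, mem_supp2, hw.2 ⟨i, hi'⟩, hw'.2 ⟨i, hi'⟩]

theorem cell_self {d : ℕ} (y : Fin d → Fin 2)
    (z : ((Finset.univ \ supp2 y : Finset (Fin d))) → Fin 2) (hz : z ≠ fun _ => 0) :
    (cell y y z).card = 0 := by
  rw [Finset.card_eq_zero]
  apply Finset.eq_empty_of_forall_notMem
  intro w hw
  simp only [cell, Finset.mem_filter, Finset.mem_univ, true_and] at hw
  apply hz
  funext i
  rw [← hw.2 i]
  by_contra h
  have := hw.1 (mem_supp2.2 h)
  exact (Finset.mem_sdiff.1 i.2).2 this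

theorem star2_card {d k : ℕ} (T : Finset (Fin d → Fin 2)) (hT : ∀ x ∈ T, (supp2 x).card = k) :
    (star2 T).card ≤ T.card * 2 ^ k := by
  have h1 : star2 T ⊆ T.biUnion
      (fun x => Finset.univ.filter (fun w => supp2 w ⊆ supp2 x)) := by
    intro w hw
    simpa [star2] using hw
  refine (Finset.card_le_card h1).trans (Finset.card_biUnion_le_card_mul _ _ _ ?_)
  intro x hx
  rw [← hT x hx, ← Finset.card_powerset]
  apply Finset.card_le_card_of_injOn supp2
  · intro w hw
    simpa using hw
  · intro w _ w' _ h
    exact supp2_inj h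

theorem freq_add {d n : ℕ} (T : Finset (Fin d → Fin 2)) (S : Finset (Fin d)) (z : S → Fin 2) :
    freq (Multiset.replicate n (fun _ => 1) + (star2 T).val) S z =
      (if z = fun _ => 1 then n else 0) +
        ((star2 T).filter (fun w => ∀ i : S, w i = z i)).card := by
  unfold freq
  rw [Multiset.filter_add, Multiset.card_add]
  congr 1
  split_ifs with h
  · rw [Multiset.filter_eq_self.2, Multiset.card_replicate]
    intro a ha i
    rw [Multiset.eq_of_mem_replicate ha, h]
  · rw [Multiset.card_eq_zero, Multiset.filter_eq_nil]
    intro a ha hc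
    apply h
    funext i
    rw [← hc i, Multiset.eq_of_mem_replicate ha]

theorem star_cells {d : ℕ} (T : Finset (Fin d → Fin 2)) (y : Fin d → Fin 2) (hy : y ∈ T)
    (M : ℝ) (hM : ∀ x ∈ T, x ≠ y → (2 : ℝ) ^ (supp2 x ∩ supp2 y).card ≤ M) (hM0 : 0 ≤ M)
    (z : ((Finset.univ \ supp2 y : Finset (Fin d))) → Fin 2) :
    (((star2 T).filter (fun w => ∀ i : ((Finset.univ \ supp2 y : Finset (Fin d))),
      w i = z i)).card : ℝ) ≤ (cell y y z).card + T.card * M := by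
  have h1 : (star2 T).filter (fun w => ∀ i : ((Finset.univ \ supp2 y : Finset (Fin d))),
      w i = z i) ⊆ T.biUnion (fun x => cell y x z) := by
    intro w hw
    simp only [star2, Finset.mem_filter, Finset.mem_univ, true_and] at hw
    obtain ⟨⟨x, hx, hs⟩, h⟩ := hw
    simp only [Finset.mem_biUnion, cell, Finset.mem_filter, Finset.mem_univ, true_and]
    exact ⟨x, hx, hs, h⟩
  have h2 := (Finset.card_le_card h1).trans Finset.card_biUnion_le
  rw [← Finset.add_sum_erase _ _ hy] at h2
  have h3 : (((star2 T).filter (fun w => ∀ i : ((Finset.univ \ supp2 y : Finset (Fin d))),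
      w i = z i)).card : ℝ) ≤ (cell y y z).card + ∑ x ∈ T.erase y, ((cell y x z).card : ℝ) := by
    exact_mod_cast h2
  refine h3.trans (add_le_add le_rfl ?_)
  have h4 : ∑ x ∈ T.erase y, ((cell y x z).card : ℝ) ≤ (T.erase y).card • M := by
    apply Finset.sum_le_card_nsmul
    intro x hx
    rw [Finset.mem_erase] at hx
    refine le_trans ?_ (hM x hx.2 hx.1)
    exact_mod_cast cell_card y x z
  refine h4.trans ?_
  rw [nsmul_eq_mul]
  apply mul_le_mul_of_nonneg_right _ hM0
  exact_mod_cast Finset.card_le_card (Finset.erase_subset _ _)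

/-- Fix `p > 1`, `ε ∈ (0,1/2)`, `γ ∈ (0,1)`, and `d ∈ ℕ` with `k = εd`
an integer.  Let `𝒞 ⊆ B(d, εd)` be a code such that any two distinct codewords have at
most `(ε²+γ)d` ones in common, let `T ⊆ 𝒞` with `y ∈ T`, and set
`S = {1,…,d} \ supp(y)`.  Let `A` be the multiset of rows consisting of `2^{εd}` copies of
the all-ones word together with one copy of each word in `star_2(T)`.  Then
`F_p(A,S) ≤ |𝒞|^{1+p}·2^{εd + (ε²+γ)dp} + 2^{εpd} + (2^{εd} + |𝒞|·2^{(ε²+γ)d})^p`. -/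
theorem stmt_9 (d k : ℕ) (p ε γ : ℝ) (hp : 1 < p) (hε : ε ∈ Set.Ioo (0 : ℝ) (1 / 2))
    (hγ : γ ∈ Set.Ioo (0 : ℝ) 1) (hk : (k : ℝ) = ε * d)
    (𝒞 : Finset (Fin d → Fin 2)) (hw : ∀ z ∈ 𝒞, (supp2 z).card = k)
    (hcode : ∀ x ∈ 𝒞, ∀ x' ∈ 𝒞, x ≠ x' →
      ((supp2 x ∩ supp2 x').card : ℝ) ≤ (ε ^ 2 + γ) * d)
    (T : Finset (Fin d → Fin 2)) (hT : T ⊆ 𝒞)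
    (y : Fin d → Fin 2) (hy : y ∈ T) :
    let S : Finset (Fin d) := Finset.univ \ supp2 y
    let A : Multiset (Fin d → Fin 2) :=
      Multiset.replicate (2 ^ k) (fun _ => 1) + (star2 T).val
    Fp A S p ≤ (𝒞.card : ℝ) ^ (1 + p) * (2 : ℝ) ^ (ε * d + (ε ^ 2 + γ) * d * p)
        + (2 : ℝ) ^ (ε * p * d)
        + ((2 : ℝ) ^ (ε * d) + (𝒞.card : ℝ) * (2 : ℝ) ^ ((ε ^ 2 + γ) * d)) ^ p := by
  intro S A
  obtain ⟨hε0, hε1⟩ := hε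
  obtain ⟨hγ0, hγ1⟩ := hγ
  have hp0 : (0 : ℝ) < p := by linarith
  have hcT : (T.card : ℝ) ≤ 𝒞.card := by exact_mod_cast Finset.card_le_card hT
  have hwT : ∀ x ∈ T, (supp2 x).card = k := fun x hx => hw x (hT hx)
  have hkpow : (2 : ℝ) ^ (ε * d) = (2 : ℝ) ^ k := by
    rw [← hk, Real.rpow_natCast]
  set M : ℝ := (2 : ℝ) ^ ((ε ^ 2 + γ) * d) with hMdef
  have hM0 : 0 < M := by positivity
  set c : ℝ := (𝒞.card : ℝ) with hc
  have hc0 : 0 ≤ c := by positivity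
  have hMb : ∀ x ∈ T, x ≠ y → (2 : ℝ) ^ (supp2 x ∩ supp2 y).card ≤ M := by
    intro x hx hxy
    rw [hMdef, ← Real.rpow_natCast]
    exact Real.rpow_le_rpow_of_exponent_le (by norm_num) (hcode x (hT hx) y (hT hy) hxy)
  have e1 : c ^ (1 + p) * (2 : ℝ) ^ (ε * d + (ε ^ 2 + γ) * d * p)
      = (c * 2 ^ k) * (c * M) ^ p := by
    have hcpos : 0 < c := by
      rw [hc]
      exact_mod_cast Finset.card_pos.2 ⟨y, hT hy⟩
    rw [Real.rpow_add hcpos, Real.rpow_one, Real.rpow_add (by norm_num), hkpow,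
      Real.rpow_mul (by norm_num), ← hMdef, Real.mul_rpow hc0 hM0.le]
    ring
  have e2 : (2 : ℝ) ^ (ε * p * d) = ((2 : ℝ) ^ k) ^ p := by
    rw [← hkpow, ← Real.rpow_mul (by norm_num)]
    congr 1
    ring
  rw [e1, e2, hkpow]
  have hstar : ∀ z : S → Fin 2,
      (((star2 T).filter (fun w => ∀ i : S, w i = z i)).card : ℝ)
        ≤ (cell y y z).card + c * M := by
    intro z
    refine (star_cells T y hy M hMb hM0.le z).trans ?_
    gcongr
  have hself : ∀ z : S → Fin 2, ((cell y y z).card : ℝ) ≤ 2 ^ k := by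
    intro z
    have := cell_card y y z
    rw [Finset.inter_self, hwT y hy] at this
    exact_mod_cast this
  have hScard : S.card = d - k := by
    simp only [S]
    rw [← Finset.compl_eq_univ_sdiff, Finset.card_compl, hwT y hy, Fintype.card_fin]
  rcases Nat.eq_zero_or_pos d with hd | hd
  · subst hd
    have hk0 : k = 0 := by
      have : (k : ℝ) = 0 := by simpa using hk
      exact_mod_cast this
    subst hk0
    have hM1 : M = 1 := by simp [hMdef]
    have hc1 : 1 ≤ c := by
      rw [hc]
      exact_mod_cast Finset.card_pos.2 ⟨y, hT hy⟩
    have hU : ∀ z : S → Fin 2, (freq A S z : ℝ) ^ p ≤ (2 ^ 0 + c * M) ^ p := by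
      intro z
      apply Real.rpow_le_rpow (by positivity) _ hp0.le
      have h1 : freq A S z ≤ 2 := by
        unfold freq
        refine (Multiset.card_le_card (Multiset.filter_le _ _)).trans ?_
        simp only [A, Multiset.card_add, Multiset.card_replicate, Finset.card_val]
        have := Finset.card_le_univ (star2 T)
        simp at this
        rw [pow_zero]
        omega
      have h2 : (freq A S z : ℝ) ≤ 2 := by exact_mod_cast h1
      rw [hM1]
      norm_num
      linarith
    have hSe : IsEmpty S := ⟨fun i => i.1.elim0⟩
    have : Fp A S p ≤ (2 ^ 0 + c * M) ^ p := by
      unfold Fp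
      rw [Fintype.sum_unique]
      exact hU _
    have h3 : 0 ≤ c * 2 ^ 0 * (c * M) ^ p := by
      exact mul_nonneg (mul_nonneg hc0 (pow_nonneg zero_le_two 0)) (Real.rpow_nonneg (mul_nonneg hc0 hM0.le) p)
    have h4 : (0 : ℝ) ≤ (2 ^ 0) ^ p := Real.rpow_nonneg (by norm_num) p
    linarith
  have hdR : (0 : ℝ) < d := by exact_mod_cast hd
  have h2k : 2 * k < d := by
    have : (2 : ℝ) * k < d := by rw [hk]; nlinarith
    exact_mod_cast this
  have hSlt : k < S.card := by omega
  have hSne : Nonempty S := by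
    obtain ⟨i, hi⟩ := Finset.card_pos.1 (by omega : 0 < S.card)
    exact ⟨⟨i, hi⟩⟩
  have h01 : (fun _ : S => (1 : Fin 2)) ≠ fun _ => 0 := by
    intro h
    obtain ⟨i⟩ := hSne
    exact absurd (congrFun h i) (by decide)
  have hone : ((star2 T).filter (fun w => ∀ i : S, w i = 1)).card = 0 := by
    rw [Finset.card_eq_zero]
    apply Finset.eq_empty_of_forall_notMem
    intro w hw'
    simp only [star2, Finset.mem_filter, Finset.mem_univ, true_and] at hw'
    obtain ⟨⟨x, hx, hs⟩, h⟩ := hw'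
    have : S ⊆ supp2 x := by
      intro i hi
      apply hs
      rw [mem_supp2, h ⟨i, hi⟩]
      decide
    have := Finset.card_le_card this
    rw [hwT x hx] at this
    omega
  set P : Finset (S → Fin 2) := (star2 T).image (fun w => fun i : S => w i) with hP
  have hPc : (P.card : ℝ) ≤ c * 2 ^ k := by
    have h1 : P.card ≤ T.card * 2 ^ k := Finset.card_image_le.trans (star2_card T hwT)
    have h2 : (P.card : ℝ) ≤ T.card * 2 ^ k := by exact_mod_cast h1
    refine h2.trans ?_
    gcongr
  have key : ∀ z : S → Fin 2, (freq A S z : ℝ) ^ p ≤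
      (if z ∈ P then (c * M) ^ p else 0) + (if z = (fun _ => 1) then ((2 : ℝ) ^ k) ^ p else 0)
        + (if z = (fun _ => 0) then ((2 : ℝ) ^ k + c * M) ^ p else 0) := by
    intro z
    have hf : freq A S z = _ := freq_add T S z
    rw [hf]
    have n1 : 0 ≤ (if z ∈ P then (c * M) ^ p else 0) := by
      split_ifs <;> positivity
    by_cases hz1 : z = fun _ => 1
    · subst hz1
      rw [hone]
      simp only [if_true, h01, if_false]
      push_cast
      simp only [add_zero]
      linarith
    by_cases hz0 : z = fun _ => 0
    · simp only [hz1, if_false, zero_add, add_zero]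
      rw [if_pos hz0]
      have : (((star2 T).filter (fun w => ∀ i : S, w i = z i)).card : ℝ) ^ p
          ≤ ((2 : ℝ) ^ k + c * M) ^ p := by
        apply Real.rpow_le_rpow (by positivity) _ hp0.le
        linarith [hstar z, hself z]
      linarith
    · simp only [hz1, hz0, if_false, zero_add, add_zero]
      split_ifs with hzP
      · apply Real.rpow_le_rpow (by positivity) _ hp0.le
        have := hstar z
        rw [cell_self y z hz0] at this
        simpa using this
      · have : ((star2 T).filter (fun w => ∀ i : S, w i = z i)) = ∅ := by
          apply Finset.eq_empty_of_forall_notMem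
          intro w hw'
          rw [Finset.mem_filter] at hw'
          apply hzP
          rw [hP, Finset.mem_image]
          exact ⟨w, hw'.1, funext hw'.2⟩
        rw [this, Finset.card_empty, Nat.cast_zero, Real.zero_rpow hp0.ne']
  unfold Fp
  refine (Finset.sum_le_sum (fun z _ => key z)).trans ?_
  rw [Finset.sum_add_distrib, Finset.sum_add_distrib, Finset.sum_ite_eq' Finset.univ,
    Finset.sum_ite_eq' Finset.univ, Finset.sum_ite_mem, Finset.sum_const, nsmul_eq_mul,
    Finset.univ_inter]
  simp only [Finset.mem_univ, if_true]
  gcongr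
end

section
/- Fix p > 0, ε ∈ (0,1/2) and γ ∈ (0,1), and d ∈ ℕ with εd an integer. Let 𝒞 ⊆ B(d, εd) be a code such that any two distinct codewords have at most (ε²+γ)d ones in common, let T ⊆ 𝒞 and y ∈ 𝒞 \ T, and set S = {1,…,d} \ supp(y). Let A be the multiset of rows consisting of 2^{εd} copies of the all-ones word 1_d together with one copy of each word in star_2(T). Then the frequency of the all-zeros pattern satisfies f_{0_S}(A,S) ≤ |𝒞| · 2^{(ε²+γ)d}, while F_p(A,S) ≥ 2^{εpd}. -/
open scoped Classical

theorem supp2_inj_s10 {d : ℕ} : Function.Injective (supp2 (d := d)) := by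
  intro a b h
  funext i
  have h1 : i ∈ supp2 a ↔ i ∈ supp2 b := by rw [h]
  simp only [supp2, Finset.mem_filter, Finset.mem_univ, true_and] at h1
  generalize a i = u at *
  generalize b i = v at *
  revert u v
  decide

theorem card_sub {d : ℕ} (U : Finset (Fin d)) :
    (Finset.univ.filter (fun w : Fin d → Fin 2 => supp2 w ⊆ U)).card ≤ 2 ^ U.card := by
  rw [← Finset.card_powerset]
  apply Finset.card_le_card_of_injOn supp2
  · intro w hw
    simpa using hw
  · exact supp2_inj_s10.injOn

/-- Fix `p > 0`, `ε ∈ (0,1/2)`, `γ ∈ (0,1)`, and `d ∈ ℕ` with `k = εd`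
an integer.  Let `𝒞 ⊆ B(d, εd)` be a code such that any two distinct codewords have at
most `(ε²+γ)d` ones in common, let `T ⊆ 𝒞` and `y ∈ 𝒞 \ T`, and set
`S = {1,…,d} \ supp(y)`.  Let `A` be the multiset of rows consisting of `2^{εd}` copies of
the all-ones word together with one copy of each word in `star_2(T)`.  Then the frequency
of the all-zeros pattern satisfies `f_{0_S}(A,S) ≤ |𝒞| · 2^{(ε²+γ)d}`, while
`F_p(A,S) ≥ 2^{εpd}`. -/
theorem stmt_10 (d k : ℕ) (p ε γ : ℝ) (hp : 0 < p) (hε : ε ∈ Set.Ioo (0 : ℝ) (1 / 2))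
    (hγ : γ ∈ Set.Ioo (0 : ℝ) 1) (hk : (k : ℝ) = ε * d)
    (𝒞 : Finset (Fin d → Fin 2)) (hw : ∀ z ∈ 𝒞, (supp2 z).card = k)
    (hcode : ∀ x ∈ 𝒞, ∀ x' ∈ 𝒞, x ≠ x' →
      ((supp2 x ∩ supp2 x').card : ℝ) ≤ (ε ^ 2 + γ) * d)
    (T : Finset (Fin d → Fin 2)) (hT : T ⊆ 𝒞)
    (y : Fin d → Fin 2) (hy𝒞 : y ∈ 𝒞) (hyT : y ∉ T) :
    let S : Finset (Fin d) := Finset.univ \ supp2 y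
    let A : Multiset (Fin d → Fin 2) :=
      Multiset.replicate (2 ^ k) (fun _ => 1) + (star2 T).val
    ((freq A S (fun _ => 0) : ℝ) ≤ (𝒞.card : ℝ) * (2 : ℝ) ^ ((ε ^ 2 + γ) * d)) ∧
      (2 : ℝ) ^ (ε * p * d) ≤ Fp A S p := by
  intro S A
  have h2 : (1 : ℝ) ≤ 2 := by norm_num
  constructor
  · have hsplit : freq A S (fun _ => 0) =
        ((Multiset.replicate (2 ^ k) (fun _ : Fin d => (1 : Fin 2))).filter
          (fun w => ∀ i : S, w i = 0)).card +
        ((star2 T).filter (fun w => ∀ i : S, w i = 0)).card := by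
      simp only [freq, A, Multiset.filter_add, Multiset.card_add]
      rfl
    rcases Nat.eq_zero_or_pos d with hd | hd
    · subst hd
      have hk0 : k = 0 := by
        have : (k : ℝ) = 0 := by simpa using hk
        exact_mod_cast this
      subst hk0
      have hT0 : T = ∅ := by
        apply Finset.eq_empty_of_forall_notMem
        intro t ht
        exact hyT ((Subsingleton.elim y t) ▸ ht)
      have hs : star2 T = ∅ := by simp [star2, hT0]
      have h1 : freq A S (fun _ => 0) ≤ 1 := by
        rw [hsplit, hs]
        have := Multiset.card_le_card (Multiset.filter_le (fun w => ∀ i : S, w i = 0)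
          (Multiset.replicate (2 ^ 0) (fun _ : Fin 0 => (1 : Fin 2))))
        simpa using this
      have h3 : 1 ≤ 𝒞.card := Finset.card_pos.mpr ⟨y, hy𝒞⟩
      have h4 : freq A S (fun _ => 0) ≤ 𝒞.card := h1.trans h3
      simpa using (by exact_mod_cast h4 : (freq A S (fun _ => 0) : ℝ) ≤ 𝒞.card)
    · have hS : ∃ i, i ∈ S := by
        by_contra hne
        push Not at hne
        have hu : supp2 y = Finset.univ := by
          ext i
          have := hne i
          simpa [S] using this
        have hc := hw y hy𝒞
        rw [hu, Finset.card_univ, Fintype.card_fin] at hc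
        have hd' : (0 : ℝ) < d := by exact_mod_cast hd
        rw [← hc] at hk
        nlinarith [hε.2]
      obtain ⟨i, hi⟩ := hS
      have hz : ((Multiset.replicate (2 ^ k) (fun _ : Fin d => (1 : Fin 2))).filter
          (fun w => ∀ i : S, w i = 0)) = 0 := by
        rw [Multiset.filter_eq_nil]
        intro w hw' hall
        rw [Multiset.eq_of_mem_replicate hw'] at hall
        exact one_ne_zero (α := Fin 2) (hall ⟨i, hi⟩)
      rw [hsplit, hz, Multiset.card_zero, zero_add]
      have hsub : (star2 T).filter (fun w => ∀ i : S, w i = 0) ⊆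
          T.biUnion (fun t => Finset.univ.filter
            (fun w : Fin d → Fin 2 => supp2 w ⊆ supp2 t ∩ supp2 y)) := by
        intro w hw'
        rw [Finset.mem_filter] at hw'
        obtain ⟨hst, hzero⟩ := hw'
        simp only [star2, Finset.mem_filter, Finset.mem_univ, true_and] at hst
        obtain ⟨t, ht, hwt⟩ := hst
        simp only [Finset.mem_biUnion, Finset.mem_filter, Finset.mem_univ, true_and]
        refine ⟨t, ht, Finset.subset_inter hwt ?_⟩
        intro j hj
        by_contra hjy
        have hjS : j ∈ S := by simp [S, hjy]
        have := hzero ⟨j, hjS⟩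
        simp only [supp2, Finset.mem_filter] at hj
        exact hj.2 this
      have hcard := (Finset.card_le_card hsub).trans Finset.card_biUnion_le
      have hcard' : ((((star2 T).filter (fun w => ∀ i : S, w i = 0)).card : ℕ) : ℝ) ≤
          ∑ t ∈ T, ((Finset.univ.filter
            (fun w : Fin d → Fin 2 => supp2 w ⊆ supp2 t ∩ supp2 y)).card : ℝ) := by
        exact_mod_cast hcard
      refine hcard'.trans ?_
      have hterm : ∀ t ∈ T, ((Finset.univ.filter
            (fun w : Fin d → Fin 2 => supp2 w ⊆ supp2 t ∩ supp2 y)).card : ℝ) ≤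
            (2 : ℝ) ^ ((ε ^ 2 + γ) * d) := by
        intro t ht
        have ha : ((Finset.univ.filter
            (fun w : Fin d → Fin 2 => supp2 w ⊆ supp2 t ∩ supp2 y)).card : ℝ) ≤
            (2 : ℝ) ^ (supp2 t ∩ supp2 y).card := by
          exact_mod_cast card_sub (supp2 t ∩ supp2 y)
        refine ha.trans ?_
        rw [← Real.rpow_natCast]
        exact Real.rpow_le_rpow_of_exponent_le h2
          (hcode t (hT ht) y hy𝒞 (fun h => hyT (h ▸ ht)))
      refine (Finset.sum_le_sum hterm).trans ?_
      rw [Finset.sum_const, nsmul_eq_mul]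
      have : (T.card : ℝ) ≤ 𝒞.card := by exact_mod_cast Finset.card_le_card hT
      gcongr
  · have hf : 2 ^ k ≤ freq A S (fun _ => 1) := by
      simp only [freq, A, Multiset.filter_add, Multiset.card_add]
      rw [Multiset.filter_eq_self.mpr]
      · simp
      · intro w hw' i
        rw [Multiset.eq_of_mem_replicate hw']
    have hf' : (2 : ℝ) ^ k ≤ freq A S (fun _ => 1) := by exact_mod_cast hf
    calc (2 : ℝ) ^ (ε * p * d) = ((2 : ℝ) ^ k) ^ p := by
          rw [← Real.rpow_natCast, ← Real.rpow_mul (by norm_num), hk]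
          congr 1
          ring
      _ ≤ (freq A S (fun _ => 1) : ℝ) ^ p := Real.rpow_le_rpow (by positivity) hf' hp.le
      _ ≤ Fp A S p := by
          unfold Fp
          exact Finset.single_le_sum (f := fun z : S → Fin 2 => (freq A S z : ℝ) ^ p)
            (fun z _ => by positivity) (Finset.mem_univ (fun _ => 1))
end

section
/- Fix 0 < p < 1, ε ∈ (0,1), c > 0, and d ∈ ℕ with εd an integer. Let 𝒞 ⊆ B(d, εd) be a code such that any two distinct codewords have at most cd ones in common, let T ⊆ 𝒞 and y ∈ 𝒞 \ T, set S = supp(y), and let A be the multiset consisting of one copy of each word in star_2(T). Then F_p(A,S) ≤ r^{1−p} · N^p, where r = Σ_{i=0}^{⌊cd⌋} C(d,i) and N = |T| · 2^{εd}. -/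
open scoped Classical

theorem holder_aux {ι : Type*} (Z : Finset ι) (f : ι → ℝ) (hf : ∀ i, 0 ≤ f i) (p : ℝ)
    (hp0 : 0 < p) (hp1 : p < 1) :
    ∑ i ∈ Z, f i ^ p ≤ (Z.card : ℝ) ^ (1 - p) * (∑ i ∈ Z, f i) ^ p := by
  have hq : (1 / (1 - p)).HolderConjugate (1 / p) := by
    rw [Real.holderConjugate_iff]
    constructor
    · rw [lt_div_iff₀ (by linarith)]; linarith
    · simp
  have h := Real.inner_le_Lp_mul_Lq_of_nonneg Z hq (f := fun _ => (1 : ℝ))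
    (g := fun i => f i ^ p) (fun _ _ => zero_le_one) (fun i _ => Real.rpow_nonneg (hf i) p)
  have e : ∀ i, (f i ^ p) ^ (1 / p) = f i := fun i => by
    rw [← Real.rpow_mul (hf i), mul_one_div_cancel hp0.ne', Real.rpow_one]
  simp only [e, one_mul, Real.one_rpow, one_div_one_div] at h
  simpa using h

theorem word_ext {d : ℕ} (u v : Fin d → Fin 2) (h : supp2 u = supp2 v) : u = v := by
  funext i
  have := Finset.ext_iff.1 h i
  simp only [supp2, Finset.mem_filter, Finset.mem_univ, true_and] at this
  omega

theorem star_card {d k : ℕ} (T : Finset (Fin d → Fin 2)) (hw : ∀ z ∈ T, (supp2 z).card = k) :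
    (star2 T).card ≤ T.card * 2 ^ k := by
  have h1 : (star2 T).card ≤ (T.biUnion (fun t => (supp2 t).powerset)).card := by
    apply Finset.card_le_card_of_injOn supp2
    · intro w hw
      simp only [star2, Finset.coe_filter, Finset.mem_univ, true_and, Set.mem_setOf_eq] at hw
      simpa using hw
    · intro u _ v _ h
      exact word_ext u v h
  refine h1.trans (Finset.card_biUnion_le_card_mul _ _ _ ?_)
  intro t ht
  rw [Finset.card_powerset, hw t ht]

theorem sum_freq {d : ℕ} (A : Finset (Fin d → Fin 2)) (S : Finset (Fin d)) :
    ∑ z : S → Fin 2, freq A.val S z = A.card := by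
  rw [Finset.card_eq_sum_card_fiberwise (f := fun w => fun i : S => w i) (t := Finset.univ)
    (fun _ _ => by simp)]
  apply Finset.sum_congr rfl
  intro z _
  unfold freq
  rw [← Finset.filter_val, Finset.card_val]
  congr 1
  ext w
  simp [funext_iff]

theorem choose_aux (d n : ℕ) :
    (Finset.univ.filter (fun s : Finset (Fin d) => s.card ≤ n)).card
      = ∑ i ∈ Finset.range (n + 1), d.choose i := by
  rw [Finset.card_eq_sum_card_fiberwise (f := Finset.card) (t := Finset.range (n + 1))
    (fun s hs => by
      simp only [Finset.coe_filter, Finset.mem_univ, true_and, Set.mem_setOf_eq] at hs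
      simp; omega)]
  apply Finset.sum_congr rfl
  intro i hi
  rw [Finset.mem_range] at hi
  have : d.choose i = (Finset.powersetCard i (Finset.univ : Finset (Fin d))).card := by simp
  rw [this]
  congr 1
  ext s
  simp only [Finset.mem_filter, Finset.mem_univ, true_and, Finset.mem_powersetCard,
    Finset.subset_univ]
  omega

theorem patterns_card {d n : ℕ} (T : Finset (Fin d → Fin 2)) (S : Finset (Fin d))
    (h : ∀ t ∈ T, (supp2 t ∩ S).card ≤ n) :
    (Finset.univ.filter (fun z : S → Fin 2 => freq (star2 T).val S z ≠ 0)).card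
      ≤ ∑ i ∈ Finset.range (n + 1), d.choose i := by
  rw [← choose_aux]
  apply Finset.card_le_card_of_injOn
    (fun z => (Finset.univ.filter (fun i : S => z i ≠ 0)).map (Function.Embedding.subtype _))
  · intro z hz
    simp only [Finset.coe_filter, Finset.mem_univ, true_and, Set.mem_setOf_eq] at hz ⊢
    unfold freq at hz
    obtain ⟨w, hw⟩ := Multiset.card_pos_iff_exists_mem.1 (Nat.pos_of_ne_zero hz)
    rw [Multiset.mem_filter, Finset.mem_val] at hw
    obtain ⟨hw, hwz⟩ := hw
    simp only [star2, Finset.mem_filter, Finset.mem_univ, true_and] at hw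
    obtain ⟨t, ht, hwt⟩ := hw
    refine (Finset.card_le_card ?_).trans (h t ht)
    intro i hi
    simp only [Finset.mem_map, Finset.mem_filter, Finset.mem_univ, true_and] at hi
    obtain ⟨j, hj, rfl⟩ := hi
    refine Finset.mem_inter.2 ⟨hwt ?_, j.2⟩
    simp only [supp2, Finset.mem_filter, Finset.mem_univ, true_and]
    have := hwz j
    intro h0
    exact hj (this ▸ h0)
  · intro u _ v _ huv
    have := Finset.map_injective _ huv
    funext i
    have := Finset.ext_iff.1 this i
    simp only [Finset.mem_filter, Finset.mem_univ, true_and] at this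
    omega

/-- Fix `0 < p < 1`, `ε ∈ (0,1)`, `c > 0`, and `d ∈ ℕ` with `k = εd` an
integer.  Let `𝒞 ⊆ B(d, εd)` be a code such that any two distinct codewords have at most
`cd` ones in common, let `T ⊆ 𝒞` and `y ∈ 𝒞 \ T`, set `S = supp(y)`, and let `A` be the
multiset consisting of one copy of each word in `star_2(T)`.  Then
`F_p(A,S) ≤ r^{1−p} · N^p`, where `r = Σ_{i=0}^{⌊cd⌋} C(d,i)` and `N = |T| · 2^{εd}`. -/
theorem stmt_12 (d k : ℕ) (p ε c : ℝ) (hp0 : 0 < p) (hp1 : p < 1)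
    (hε : ε ∈ Set.Ioo (0 : ℝ) 1) (hc : 0 < c) (hk : (k : ℝ) = ε * d)
    (𝒞 : Finset (Fin d → Fin 2)) (hw : ∀ z ∈ 𝒞, (supp2 z).card = k)
    (hcode : ∀ x ∈ 𝒞, ∀ x' ∈ 𝒞, x ≠ x' →
      ((supp2 x ∩ supp2 x').card : ℝ) ≤ c * d)
    (T : Finset (Fin d → Fin 2)) (hT : T ⊆ 𝒞)
    (y : Fin d → Fin 2) (hy𝒞 : y ∈ 𝒞) (hyT : y ∉ T) :
    Fp (star2 T).val (supp2 y) p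
      ≤ ((∑ i ∈ Finset.range (⌊c * d⌋₊ + 1), d.choose i : ℕ) : ℝ) ^ (1 - p) *
          ((T.card * 2 ^ k : ℕ) : ℝ) ^ p := by
  set Z := Finset.univ.filter
    (fun z : supp2 y → Fin 2 => freq (star2 T).val (supp2 y) z ≠ 0) with hZ
  have hr := patterns_card (n := ⌊c * d⌋₊) T (supp2 y) (fun t ht =>
    Nat.le_floor (hcode t (hT ht) y hy𝒞 (fun e => hyT (e ▸ ht))))
  have hN := star_card T (fun z hz => hw z (hT hz))
  have h1 : Fp (star2 T).val (supp2 y) p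
      = ∑ z ∈ Z, (freq (star2 T).val (supp2 y) z : ℝ) ^ p := by
    unfold Fp
    symm
    apply Finset.sum_subset (Finset.subset_univ _)
    intro z _ hz
    have : freq (star2 T).val (supp2 y) z = 0 := by simpa [hZ] using hz
    rw [this, Nat.cast_zero, Real.zero_rpow hp0.ne']
  have h2 : ∑ z ∈ Z, freq (star2 T).val (supp2 y) z ≤ T.card * 2 ^ k :=
    ((Finset.sum_le_sum_of_subset (Finset.subset_univ _)).trans_eq (sum_freq _ _)).trans hN
  rw [h1]
  refine (holder_aux Z _ (fun _ => Nat.cast_nonneg _) p hp0 hp1).trans ?_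
  apply mul_le_mul
  · exact Real.rpow_le_rpow (Nat.cast_nonneg _) (by exact_mod_cast hr) (by linarith)
  · refine Real.rpow_le_rpow (Finset.sum_nonneg fun _ _ => Nat.cast_nonneg _) ?_ hp0.le
    exact_mod_cast h2
  · exact Real.rpow_nonneg (Finset.sum_nonneg fun _ _ => Nat.cast_nonneg _) _
  · positivity
end

section
/- Let p ≥ 1, let A ∈ {0,1}^{n×d}, and let C ⊆ C' ⊆ {1,…,d} with |C' \ C| ≤ m. Then F_p(A,C) / 2^{m(p−1)} ≤ F_p(A,C') ≤ F_p(A,C). -/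
open scoped Classical

/-- The projected frequency moment `F_p(A,U) = Σ_z f_z(A,U)^p`, where `f_z(A,U)` is the
number of rows of `A` whose restriction to the columns in `U` equals the pattern `z`. -/
noncomputable def FpA {n d : ℕ} (A : Fin n → Fin d → Fin 2) (U : Finset (Fin d))
    (p : ℝ) : ℝ :=
  ∑ z : ↥U → Fin 2,
    ((Finset.univ.filter (fun i : Fin n => ∀ j : ↥U, A i j = z j)).card : ℝ) ^ p

theorem aux_superadd {ι : Type*} (s : Finset ι) (f : ι → ℝ) (hf : ∀ i, 0 ≤ f i) (p : ℝ)
    (hp : 1 ≤ p) : ∑ i ∈ s, f i ^ p ≤ (∑ i ∈ s, f i) ^ p := by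
  induction s using Finset.induction_on with
  | empty => simp [Real.zero_rpow (by linarith : p ≠ 0)]
  | insert a s ha ih =>
    rw [Finset.sum_insert ha, Finset.sum_insert ha]
    have h := Real.add_rpow_le_rpow_add (hf a) (Finset.sum_nonneg (fun i _ => hf i) : 0 ≤ ∑ i ∈ s, f i) hp
    linarith

theorem aux_card {d m : ℕ} (C C' : Finset (Fin d)) (hsub : C ⊆ C') (hm : (C' \ C).card ≤ m)
    (z : ↥C → Fin 2) :
    (Finset.univ.filter (fun w : ↥C' → Fin 2 => (fun j : ↥C => w ⟨j, hsub j.2⟩) = z)).card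
      ≤ 2 ^ m := by
  have h1 : (Finset.univ.filter
      (fun w : ↥C' → Fin 2 => (fun j : ↥C => w ⟨j, hsub j.2⟩) = z)).card
      ≤ (Finset.univ : Finset (↥(C' \ C) → Fin 2)).card := by
    apply Finset.card_le_card_of_injOn
      (fun w (j : ↥(C' \ C)) => w ⟨j, (Finset.mem_sdiff.1 j.2).1⟩) (fun _ _ => by simp)
    intro w hw v hv hwv
    simp only [Finset.coe_filter, Finset.mem_univ, true_and, Set.mem_setOf_eq] at hw hv
    funext ⟨j, hj⟩
    by_cases hc : j ∈ C
    · exact congrFun (hw.trans hv.symm) ⟨j, hc⟩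
    · exact congrFun hwv ⟨j, Finset.mem_sdiff.2 ⟨hj, hc⟩⟩
  refine h1.trans ?_
  rw [Finset.card_univ, Fintype.card_fun, Fintype.card_fin, Fintype.card_coe]
  exact Nat.pow_le_pow_right (by norm_num) hm

theorem aux_freq {n d : ℕ} (A : Fin n → Fin d → Fin 2) (C C' : Finset (Fin d)) (hsub : C ⊆ C')
    (z : ↥C → Fin 2) :
    ((Finset.univ.filter (fun i : Fin n => ∀ j : ↥C, A i j = z j)).card : ℝ)
     = ∑ w ∈ Finset.univ.filter (fun w : ↥C' → Fin 2 => (fun j : ↥C => w ⟨j, hsub j.2⟩) = z),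
      ((Finset.univ.filter (fun i : Fin n => ∀ j : ↥C', A i j = w j)).card : ℝ) := by
  rw [← Nat.cast_sum]
  congr 1
  rw [Finset.card_eq_sum_card_fiberwise (f := fun i (j : ↥C') => A i j)
    (t := Finset.univ.filter (fun w : ↥C' → Fin 2 => (fun j : ↥C => w ⟨j, hsub j.2⟩) = z))]
  · apply Finset.sum_congr rfl
    intro w hw
    simp only [Finset.mem_filter, Finset.mem_univ, true_and] at hw
    congr 1
    ext i
    simp only [Finset.mem_filter, Finset.mem_univ, true_and]
    constructor
    · rintro ⟨_, h⟩ j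
      exact congrFun h j
    · intro h
      refine ⟨fun j => ?_, funext h⟩
      rw [← hw]
      exact h ⟨j, hsub j.2⟩
  · intro i hi
    simp only [Finset.coe_filter, Finset.mem_univ, true_and, Set.mem_setOf_eq] at hi ⊢
    exact funext hi

/-- Let `p ≥ 1`, let `A ∈ {0,1}^{n×d}`, and let `C ⊆ C' ⊆ {1,…,d}`
with `|C' \ C| ≤ m`.  Then `F_p(A,C) / 2^{m(p−1)} ≤ F_p(A,C') ≤ F_p(A,C)`. -/
theorem stmt_18 (n d m : ℕ) (p : ℝ) (hp : 1 ≤ p) (A : Fin n → Fin d → Fin 2)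
    (C C' : Finset (Fin d)) (hsub : C ⊆ C') (hm : (C' \ C).card ≤ m) :
    FpA A C p / (2 : ℝ) ^ ((m : ℝ) * (p - 1)) ≤ FpA A C' p ∧ FpA A C' p ≤ FpA A C p := by
  have key : FpA A C' p = ∑ z : ↥C → Fin 2,
      ∑ w ∈ Finset.univ.filter (fun w : ↥C' → Fin 2 => (fun j : ↥C => w ⟨j, hsub j.2⟩) = z),
      ((Finset.univ.filter (fun i : Fin n => ∀ j : ↥C', A i j = w j)).card : ℝ) ^ p := by
    unfold FpA
    exact (Finset.sum_fiberwise _ _ _).symm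
  rw [key]
  constructor
  · rw [div_le_iff₀ (by positivity), Finset.sum_mul]
    unfold FpA
    apply Finset.sum_le_sum
    intro z _
    rw [aux_freq A C C' hsub z]
    have h := Real.rpow_sum_le_const_mul_sum_rpow
      (Finset.univ.filter (fun w : ↥C' → Fin 2 => (fun j : ↥C => w ⟨j, hsub j.2⟩) = z))
      (fun w => ((Finset.univ.filter (fun i : Fin n => ∀ j : ↥C', A i j = w j)).card : ℝ)) hp
    simp only [Nat.abs_cast] at h
    refine h.trans ?_
    rw [mul_comm]
    refine mul_le_mul_of_nonneg_left ?_ (Finset.sum_nonneg fun _ _ => by positivity)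
    rw [Real.rpow_mul (by norm_num), Real.rpow_natCast]
    apply Real.rpow_le_rpow (by positivity) _ (by linarith)
    exact_mod_cast aux_card C C' hsub hm z
  · unfold FpA
    apply Finset.sum_le_sum
    intro z _
    rw [aux_freq A C C' hsub z]
    exact aux_superadd _ _ (fun _ => by positivity) p hp
end
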